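/- For every integer n ≥ 4, a 3-Mcycle of [n] exists if and only if n divides the binomial coefficient C(n+2, 3). -/

import Mathlib

/-- A `t`-Mcycle of `[n]`: a cyclic sequence of length `m = C(n+t-1, t)` of elements of
`[n]` (modeled as `Fin n`) such that every multiset of size `t` over `[n]` appears
exactly once among the `m` cyclic windows of length `t`. -/
def IsMcycle (n t : ℕ) (a : ZMod ((n + t - 1).choose t) → Fin n) : Prop :=
  ∀ s : Multiset (Fin n), Multiset.card s = t →
    ∃! i : ZMod ((n + t - 1).choose t),
      (Multiset.range t).map (fun j => a (i + (j : ZMod ((n + t - 1).choose t)))) = s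

/-! Suppose a `t`-Mcycle exists. Summing over its windows, and using that every multiset is read
once, shows that all letters occur equally often, so `n` divides its length. When `t` is prime this
forces `t ∤ n`, by Lucas' theorem.

Conversely, let `3 ∤ n` and place `Fin n` on a circle. A triple in cyclic order has three steps with
sum `n`, and they are all equal only if they all vanish, so one of them can be singled out. Leaving
it out turns the triple into an edge `(a, b) → (b, c)` of a graph on the pairs of letters. As the
singled out step does not depend on the order of the other two, exchanging these sends an edge to
one that starts where the first ended, so there is a permutation of the edges in which every edge is
followed by one leaving its target. Among these permutations take one whose cycle through a given
edge is maximal: if an edge outside the cycle left a vertex on it, composing with a transposition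
would merge their cycles. Since every edge is reachable, the cycle is an Eulerian circuit, and its
letters form the `3`-Mcycle. -/

open Equiv Function Relation

theorem not_dvd_of_dvd_choose {p n : ℕ} (hp : p.Prime) (hn : n ≠ 0)
    (h : n ∣ (n + p - 1).choose p) : ¬ p ∣ n := by
  rintro ⟨k, rfl⟩
  have := Fact.mk hp
  obtain ⟨q, rfl⟩ : ∃ q, p = q + 1 := Nat.exists_eq_succ_of_ne_zero hp.ne_zero
  obtain ⟨c, hc⟩ : (q + 1) * k ∣ ((q + 1) * k + q).choose (q + 1) := h
  have hlucas : ((q + 1) * k + q).choose q ≡ 1 [MOD q + 1] := by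
    have h := Choose.choose_modEq_choose_mod_mul_choose_div_nat
      (n := (q + 1) * k + q) (k := q) (p := q + 1)
    simpa [Nat.mul_add_mod, Nat.mod_eq_of_lt, Nat.div_eq_of_lt] using h
  have hchoose : ((q + 1) * k + q).choose q = (q + 1) * c := by
    have h := Nat.choose_succ_right_eq ((q + 1) * k + q) q
    rw [hc, Nat.add_sub_cancel] at h
    exact Nat.eq_of_mul_eq_mul_right (Nat.pos_of_ne_zero hn) (by linarith)
  have hdvd : q + 1 ∣ 1 := (hlucas.dvd_iff dvd_rfl).1 ⟨c, hchoose⟩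
  exact hp.one_lt.ne' (Nat.dvd_one.1 hdvd)

section Window

variable {α : Type*} {m n t : ℕ}

/-- The multiset of letters in the cyclic window of length `t` of `a` that starts at `i`. -/
def window (t : ℕ) (a : ZMod m → α) (i : ZMod m) : Sym α t :=
  ⟨(Multiset.range t).map fun j : ℕ => a (i + j), by simp⟩

theorem sum_count_window [NeZero m] [DecidableEq α] (a : ZMod m → α) (x : α) :
    ∑ i, (window t a i : Multiset α).count x = t * Fintype.card {i // a i = x} := by
  calc ∑ i, (window t a i : Multiset α).count x
      = ∑ i, ∑ j ∈ Finset.range t, if a (i + j) = x then 1 else 0 := by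
        refine Finset.sum_congr rfl fun i _ => ?_
        simp only [window, Sym.coe_mk, Multiset.count_map, Finset.sum_boole, eq_comm (a := x)]
        rfl
    _ = ∑ j ∈ Finset.range t, ∑ i, if a (i + j) = x then 1 else 0 := Finset.sum_comm
    _ = ∑ j ∈ Finset.range t, ∑ i, if a i = x then 1 else 0 :=
        Finset.sum_congr rfl fun j _ =>
          Equiv.sum_comp (Equiv.addRight (j : ZMod m)) fun i => if a i = x then 1 else 0
    _ = t * Fintype.card {i // a i = x} := by simp [Fintype.card_subtype]

theorem sum_count_sym_eq [Fintype α] [DecidableEq α] (t : ℕ) (x y : α) :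
    ∑ s : Sym α t, (s : Multiset α).count x = ∑ s : Sym α t, (s : Multiset α).count y := by
  refine Fintype.sum_equiv (Sym.equivCongr (swap x y)) _ _ fun s => ?_
  have h := Multiset.count_map_eq_count' (swap x y) s.1 (swap x y).injective x
  rw [swap_apply_left] at h
  exact h.symm

theorem isMcycle_iff_bijective_window {a : ZMod ((n + t - 1).choose t) → Fin n} :
    IsMcycle n t a ↔ Bijective (window t a) := by
  rw [bijective_iff_existsUnique]
  simp only [IsMcycle, window, Sym, Subtype.forall, Subtype.mk.injEq]
  simp

instance neZero_choose [NeZero n] : NeZero ((n + t - 1).choose t) :=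
  ⟨(Nat.choose_pos (by have := NeZero.pos n; omega)).ne'⟩

theorem isMcycle_of_surjective_window [NeZero n] {a : ZMod ((n + t - 1).choose t) → Fin n}
    (ha : Surjective (window t a)) : IsMcycle n t a := by
  rw [isMcycle_iff_bijective_window, Fintype.bijective_iff_surjective_and_card]
  exact ⟨ha, by rw [ZMod.card, Sym.card_sym_eq_choose, Fintype.card_fin]⟩

theorem IsMcycle.dvd_choose {a : ZMod ((n + t - 1).choose t) → Fin n} (ha : IsMcycle n t a)
    (ht : t ≠ 0) : n ∣ (n + t - 1).choose t := by
  have : NeZero n := ⟨(a 0).pos.ne'⟩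
  have hcount (x : Fin n) :
      ∑ s : Sym (Fin n) t, (s : Multiset (Fin n)).count x = t * Fintype.card {i // a i = x} := by
    rw [← sum_count_window, (isMcycle_iff_bijective_window.1 ha).sum_comp
      fun s : Sym (Fin n) t => (s : Multiset (Fin n)).count x]
  have hconst (x : Fin n) : Fintype.card {i // a i = x} = Fintype.card {i // a i = 0} :=
    Nat.eq_of_mul_eq_mul_left (Nat.pos_of_ne_zero ht) <| by
      rw [← hcount, ← hcount, sum_count_sym_eq]
  refine ⟨Fintype.card {i // a i = 0}, ?_⟩
  calc (n + t - 1).choose t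
      = Fintype.card (Σ x, {i // a i = x}) := by
        rw [Fintype.card_congr (Equiv.sigmaFiberEquiv a), ZMod.card]
    _ = n * Fintype.card {i // a i = 0} := by simp [hconst]

-- For `n = 4` the graph used for larger `n` is not connected: the vertices `(a, a + 2)` are only
-- joined to each other.
theorem exists_isMcycle_four_three :
    ∃ a : ZMod ((4 + 3 - 1).choose 3) → Fin 4, IsMcycle 4 3 a := by
  refine ⟨(![0, 0, 0, 1, 1, 1, 2, 0, 2, 0, 3, 1, 3, 1, 2, 2, 2, 3, 3, 3] : Fin 20 → Fin 4),
    isMcycle_of_surjective_window ?_⟩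
  change Surjective (window (m := 20) _ _)
  decide +kernel

end Window

section Euler

variable {E V : Type*}

section SwapMul

variable [DecidableEq E] {σ : Perm E} {x y : E}

theorem sameCycle_swap_mul_of_sameCycle [Finite E] {z : E} (hxy : ¬ σ.SameCycle x y)
    (hz : σ.SameCycle x z) : (swap x y * σ).SameCycle x z := by
  obtain ⟨k, rfl⟩ := hz.exists_nat_pow_eq
  clear hz
  induction k with
  | zero => rfl
  | succ k ih =>
    rw [pow_succ', Perm.mul_apply]
    by_cases hx : σ ((σ ^ k) x) = x
    · rw [hx]
    have hy : σ ((σ ^ k) x) ≠ y := fun hy => hxy ⟨k + 1, by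
      rw [← hy]; norm_cast; rw [pow_succ', Perm.mul_apply]⟩
    rw [← swap_apply_of_ne_of_ne hx hy, ← Perm.mul_apply]
    exact Perm.sameCycle_apply_right.2 ih

theorem sameCycle_swap_mul [Finite E] (hxy : ¬ σ.SameCycle x y) :
    (swap x y * σ).SameCycle x y := by
  have h := sameCycle_swap_mul_of_sameCycle hxy
    (Perm.sameCycle_symm_apply_right.2 (Perm.SameCycle.refl σ x))
  rw [← Perm.sameCycle_apply_right] at h
  simpa using h

end SwapMul

theorem exists_isCycleOn_of_reflTransGen [Finite E] {src tgt : E → V} {σ₀ : Perm E}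
    (hσ₀ : ∀ e, src (σ₀ e) = tgt e) {e₀ : E}
    (hconn : ∀ e, ReflTransGen (fun v w => ∃ d, src d = v ∧ tgt d = w) (src e₀) (src e)) :
    ∃ σ : Perm E, (∀ e, src (σ e) = tgt e) ∧ σ.IsCycleOn Set.univ := by
  classical
  obtain ⟨σ, hσ, hmax⟩ := {σ : Perm E | ∀ e, src (σ e) = tgt e}.toFinite.exists_maximalFor
    (fun σ => {e | σ.SameCycle e₀ e}) _ ⟨σ₀, hσ₀⟩
  have hsrc {x y : E} (hx : σ.SameCycle e₀ x) (hxy : src x = src y) : σ.SameCycle e₀ y := by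
    by_contra hy
    have hne : ¬ σ.SameCycle x y := fun h => hy (hx.trans h)
    have hτ : ∀ e, src ((swap x y * σ) e) = tgt e := fun e => by
      rw [← hσ e, Perm.mul_apply, swap_apply_def]
      split_ifs <;> simp_all
    have hτx {z : E} (hz : σ.SameCycle x z) := sameCycle_swap_mul_of_sameCycle hne hz
    have hle : {e | σ.SameCycle e₀ e} ≤ {e | (swap x y * σ).SameCycle e₀ e} := fun e he =>
      (hτx hx.symm).symm.trans (hτx (hx.symm.trans he))
    exact hy (hmax hτ hle ((hτx hx.symm).symm.trans (sameCycle_swap_mul hne)))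
  have hvertex {v : V}
      (hv : ReflTransGen (fun v w => ∃ d, src d = v ∧ tgt d = w) (src e₀) v) :
      ∀ e, src e = v → σ.SameCycle e₀ e := by
    induction hv with
    | refl => exact fun e he => hsrc (Perm.SameCycle.refl σ e₀) he.symm
    | tail _ hvw ih =>
      obtain ⟨d, hd, rfl⟩ := hvw
      exact fun e he => hsrc (Perm.sameCycle_apply_right.2 (ih d hd)) ((hσ d).trans he.symm)
  have hall (e : E) : σ.SameCycle e₀ e := hvertex (hconn e) e rfl
  exact ⟨σ, hσ, Set.bijOn_univ.2 σ.bijective, fun x _ y _ => (hall x).symm.trans (hall y)⟩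

theorem exists_bijective_zmod_of_isCycleOn [Finite E] {m : ℕ} (hm : Nat.card E = m) {σ : Perm E}
    (hσ : σ.IsCycleOn Set.univ) (e₀ : E) :
    ∃ f : ZMod m → E, Bijective f ∧ ∀ i (j : ℕ), f (i + j) = (σ ^ j) (f i) := by
  have := Fintype.ofFinite E
  have : NeZero m := ⟨hm ▸ Nat.card_ne_zero.2 ⟨⟨e₀⟩, inferInstance⟩⟩
  rw [Nat.card_eq_fintype_card] at hm
  have hpow : σ ^ m = 1 := Perm.ext fun e =>
    hm ▸ Perm.IsCycleOn.pow_card_apply (by simpa using hσ) (Finset.mem_univ e)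
  let φ : ZMod m →+ Additive (Perm E) :=
    ZMod.lift m ⟨zmultiplesHom _ (Additive.ofMul σ), by simp [← ofMul_pow, hpow]⟩
  have hφ (k : ℤ) : (φ k).toMul = σ ^ k := by simp [φ, ← ofMul_zpow]
  refine ⟨fun i => (φ i).toMul e₀, ?_, fun i j => ?_⟩
  · rw [Fintype.bijective_iff_surjective_and_card]
    refine ⟨fun e => ?_, by rw [ZMod.card, hm]⟩
    obtain ⟨k, hk⟩ := hσ.2 (Set.mem_univ e₀) (Set.mem_univ e)
    exact ⟨k, by simp only [hφ, hk]⟩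
  · have hj := hφ j
    rw [Int.cast_natCast, zpow_natCast] at hj
    simp only [add_comm i, map_add, toMul_add, hj, Perm.mul_apply]

theorem exists_isMcycle_of_isCycleOn {n t : ℕ} [NeZero n] {σ : Perm E}
    (hσ : σ.IsCycleOn Set.univ) {letter : E → Fin n}
    (hletter : ∀ s : Multiset (Fin n), s.card = t →
      ∃! e, (Multiset.range t).map (fun j : ℕ => letter ((σ ^ j) e)) = s) :
    ∃ a : ZMod ((n + t - 1).choose t) → Fin n, IsMcycle n t a := by
  let reading (e : E) : Sym (Fin n) t :=
    ⟨(Multiset.range t).map fun j : ℕ => letter ((σ ^ j) e), by simp⟩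
  have hreading : Bijective reading := by
    rw [bijective_iff_existsUnique]
    simpa only [reading, Sym, Subtype.forall, Subtype.mk.injEq] using hletter
  have : Finite E := .of_injective _ hreading.injective
  have hcard : Nat.card E = (n + t - 1).choose t := by
    rw [Nat.card_eq_of_bijective _ hreading, Nat.card_eq_fintype_card, Sym.card_sym_eq_choose,
      Fintype.card_fin]
  obtain ⟨e₀, -⟩ := hreading.surjective (Sym.replicate t 0)
  obtain ⟨f, hf, hfadd⟩ := exists_bijective_zmod_of_isCycleOn hcard hσ e₀
  refine ⟨fun i => letter (f i), isMcycle_iff_bijective_window.2 ?_⟩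
  have hwindow : window t (fun i => letter (f i)) = reading ∘ f := by
    funext i
    simp only [window, hfadd]
    rfl
  exact hwindow ▸ hreading.comp hf

end Euler

section Rotation

variable {α : Type*} {a b c a' b' c' : α}

theorem triple_eq_cases (h : ({a, b, c} : Multiset α) = {a', b', c'}) :
    (a' = a ∧ b' = b ∧ c' = c) ∨ (a' = b ∧ b' = a ∧ c' = c) ∨ (a' = c ∧ b' = b ∧ c' = a) ∨
      (a' = b ∧ b' = c ∧ c' = a) ∨ (a' = c ∧ b' = a ∧ c' = b) ∨ (a' = a ∧ b' = c ∧ c' = b) := by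
  classical
  have hperm : [a, b, c].Perm [a', b', c'] := Multiset.coe_eq_coe.1 h
  grind [List.cons_perm_iff_perm_erase, List.nil_perm]

theorem eq_rotation_of_btw [CircularPartialOrder α] (h : btw a b c) (h' : btw a' b' c')
    (heq : ({a, b, c} : Multiset α) = {a', b', c'}) :
    (a' = a ∧ b' = b ∧ c' = c) ∨ (a' = b ∧ b' = c ∧ c' = a) ∨ (a' = c ∧ b' = a ∧ c' = b) := by
  have hbca := h.cyclic_left
  have hcab := hbca.cyclic_left
  have hanti := h'.antisymm
  have hcases := triple_eq_cases heq
  grind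

theorem existsUnique_btw_triple [CircularOrder α] {R : α → α → α → Prop}
    (hex : ∀ a b c, R a b c ∨ R b c a ∨ R c a b)
    (huniq : ∀ a b c, R a b c → R b c a → a = b ∧ b = c) {s : Multiset α} (hs : s.card = 3) :
    ∃! e : {e : α × α × α // btw e.1 e.2.1 e.2.2 ∧ R e.1 e.2.1 e.2.2},
      ({e.1.1, e.1.2.1, e.1.2.2} : Multiset α) = s := by
  obtain ⟨a, b, c, hbtw, rfl⟩ : ∃ a b c : α, btw a b c ∧ ({a, b, c} : Multiset α) = s := by
    obtain ⟨a, b, c, rfl⟩ := Multiset.card_eq_three.1 hs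
    rcases btw_total a b c with h | h
    · exact ⟨a, b, c, h, rfl⟩
    · exact ⟨c, b, a, h, Multiset.coe_eq_coe.2 (List.reverse_perm [a, b, c])⟩
  have hrot (a b c : α) : ({b, c, a} : Multiset α) = {a, b, c} :=
    Multiset.coe_eq_coe.2 (List.perm_append_comm (l₁ := [b, c]) (l₂ := [a]))
  obtain ⟨⟨⟨x, y, z⟩, hxyz, hR⟩, he⟩ :
      ∃ e : {e : α × α × α // btw e.1 e.2.1 e.2.2 ∧ R e.1 e.2.1 e.2.2},
        ({e.1.1, e.1.2.1, e.1.2.2} : Multiset α) = {a, b, c} := by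
    rcases hex a b c with h | h | h
    · exact ⟨⟨(a, b, c), hbtw, h⟩, rfl⟩
    · exact ⟨⟨(b, c, a), hbtw.cyclic_left, h⟩, hrot a b c⟩
    · exact ⟨⟨(c, a, b), hbtw.cyclic_left.cyclic_left, h⟩, (hrot c a b).symm⟩
  refine ⟨_, he, ?_⟩
  rintro ⟨⟨x', y', z'⟩, hxyz', hR'⟩ he'
  have hxy := huniq x y z hR
  have hzx := huniq z x y
  rcases eq_rotation_of_btw hxyz hxyz' (he.trans he'.symm) with
    ⟨rfl, rfl, rfl⟩ | ⟨rfl, rfl, rfl⟩ | ⟨rfl, rfl, rfl⟩ <;> grind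

end Rotation

section Steps

/-- Among the three steps `x`, `y`, `z` of a cyclically ordered triple, `z` is the one left out
when the triple is read starting from `x`: either the other two are equal, or `z` has the largest
rank. -/
def OmitsThird {α β : Type*} [LT β] (rank : α → β) (x y z : α) : Prop :=
  x = y ∨ rank x < rank z ∧ rank y < rank z

section OmitsThird

variable {α β : Type*} [LinearOrder β] {rank : α → β} {x y z : α}

theorem OmitsThird.swap (h : OmitsThird rank x y z) : OmitsThird rank y x z :=
  h.imp Eq.symm And.symm

theorem OmitsThird.eq_of_rotate (h : OmitsThird rank x y z) (h' : OmitsThird rank y z x) :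
    x = y ∧ y = z := by
  unfold OmitsThird at h h'
  grind

theorem exists_rotate_omitsThird (hrank : Injective rank) (x y z : α) :
    OmitsThird rank x y z ∨ OmitsThird rank y z x ∨ OmitsThird rank z x y := by
  have hxy := hrank.eq_iff (a := x) (b := y)
  have hyz := hrank.eq_iff (a := y) (b := z)
  have hzx := hrank.eq_iff (a := z) (b := x)
  unfold OmitsThird
  grind

end OmitsThird

variable {n : ℕ} {a b c x y : Fin n}

theorem btw_iff_val_sub_add_val_sub_le :
    btw a b c ↔ ((b - a : Fin n) : ℕ) + (c - b : Fin n) ≤ n := by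
  rw [Fin.btw_iff]
  have hab := Fin.coe_int_sub_eq_ite b a
  have hbc := Fin.coe_int_sub_eq_ite c b
  split_ifs at hab hbc <;> omega

theorem eq_of_sub_eq_sub_of_not_dvd (h3 : ¬ 3 ∣ n) (hab : b - a = c - b) (hbc : c - b = a - c) :
    a = b ∧ b = c := by
  have h₁ := Fin.coe_int_sub_eq_ite b a
  have h₂ := Fin.coe_int_sub_eq_ite c b
  have h₃ := Fin.coe_int_sub_eq_ite a c
  rw [hab] at h₁
  rw [← hbc] at h₃
  simp only [Fin.ext_iff]
  split_ifs at h₁ h₂ h₃ <;> omega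

/-- Ranks the steps by size, except that half a turn comes first: it would otherwise always be
left out, and the vertices `(a, a + n / 2)` could not be reached from the others. -/
def stepRank (x : Fin n) : ℕ := if 2 * (x : ℕ) = n then 0 else x + 1

theorem stepRank_injective : Injective (stepRank (n := n)) := fun x y h => by
  unfold stepRank at h
  split_ifs at h <;> omega

/-- The triples `(a, b, c)` chosen to represent the `3`-multisets: they run once around `Fin n`,
starting after the step left out. -/
def IsEdge (a b c : Fin n) : Prop :=
  btw a b c ∧ OmitsThird stepRank (b - a) (c - b) (a - c)

theorem isEdge_iff [NeZero n] : IsEdge a (a + x) (a + x + y) ↔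
    (x : ℕ) + y ≤ n ∧ OmitsThird stepRank x y (-(x + y)) := by
  have hca : a - (a + x + y) = -(x + y) := by abel
  rw [IsEdge, btw_iff_val_sub_add_val_sub_le, hca, add_sub_cancel_left, add_sub_cancel_left]

theorem IsEdge.flip [NeZero n] (h : IsEdge a b c) : IsEdge b c (c + (b - a)) := by
  obtain ⟨x, rfl⟩ : ∃ x, b = a + x := ⟨b - a, by abel⟩
  obtain ⟨y, rfl⟩ : ∃ y, c = a + x + y := ⟨c - (a + x), by abel⟩
  rw [add_sub_cancel_left]
  rw [isEdge_iff] at h ⊢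
  exact ⟨by omega, by simpa only [add_comm y] using h.2.swap⟩

theorem IsEdge.two_mul_val_sub_le (h : IsEdge a b c) : 2 * ((b - a : Fin n) : ℕ) ≤ n := by
  obtain ⟨hbtw, hxy | ⟨hxz, -⟩⟩ := h
  · rw [btw_iff_val_sub_add_val_sub_le, ← hxy] at hbtw
    omega
  · rw [Fin.btw_iff] at hbtw
    have hab := Fin.coe_int_sub_eq_ite b a
    have hca := Fin.coe_int_sub_eq_ite a c
    unfold stepRank at hxz
    split_ifs at hab hca hxz <;> omega

theorem val_one_eq_one [NeZero n] (hn : 2 ≤ n) : ((1 : Fin n) : ℕ) = 1 := by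
  rw [Fin.val_one', Nat.mod_eq_of_lt hn]

theorem val_neg_add [NeZero n] (hpos : 0 < (x : ℕ) + y) (hle : (x : ℕ) + y ≤ n) :
    ((-(x + y) : Fin n) : ℕ) = n - (x + y) := by
  rw [Fin.val_neg, Fin.val_add_eq_ite]
  have hzero : x + y = 0 ↔ (x : ℕ) + y = n := by
    rw [← Fin.val_eq_zero_iff, Fin.val_add_eq_ite]
    split_ifs <;> omega
  simp only [hzero]
  split_ifs <;> omega

theorem isEdge_self_self_add [NeZero n] (a : Fin n) (hx : 2 * (x : ℕ) < n) :
    IsEdge a a (a + x) := by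
  suffices h : IsEdge a (a + 0) (a + 0 + x) by simpa using h
  have hle : ((0 : Fin n) : ℕ) + x ≤ n := by simp
  refine isEdge_iff.2 ⟨hle, ?_⟩
  rcases eq_or_ne x 0 with rfl | hx0
  · exact .inl rfl
  · have hpos := Fin.val_ne_zero_iff.2 hx0
    have hneg := val_neg_add (x := 0) (by omega) hle
    refine .inr ?_
    unfold stepRank
    rw [hneg, Fin.val_zero]
    split_ifs <;> omega

theorem isEdge_add_half [NeZero n] (hn : 6 ≤ n) (a : Fin n) (hx : 2 * (x : ℕ) = n) :
    IsEdge a (a + 1) (a + 1 + x) := by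
  have hone : ((1 : Fin n) : ℕ) = 1 := val_one_eq_one (by omega)
  have hle : ((1 : Fin n) : ℕ) + x ≤ n := by omega
  refine isEdge_iff.2 ⟨hle, .inr ?_⟩
  have hneg := val_neg_add (by omega) hle
  unfold stepRank
  rw [hneg, hone]
  split_ifs <;> omega

end Steps

section Edges

variable {n : ℕ}

/-- The edges of the transition graph: `(a, b, c)` leads from the vertex `(a, b)` to the vertex
`(b, c)`. -/
abbrev Edge (n : ℕ) : Type :=
  {e : Fin n × Fin n × Fin n // IsEdge e.1 e.2.1 e.2.2}

/-- The source of an edge in the transition graph. -/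
def Edge.src (e : Edge n) : Fin n × Fin n := (e.1.1, e.1.2.1)

/-- The target of an edge in the transition graph. -/
def Edge.tgt (e : Edge n) : Fin n × Fin n := e.1.2

theorem existsUnique_edge (h3 : ¬ 3 ∣ n) {s : Multiset (Fin n)} (hs : s.card = 3) :
    ∃! e : Edge n, ({e.1.1, e.1.2.1, e.1.2.2} : Multiset (Fin n)) = s := by
  refine existsUnique_btw_triple
    (fun a b c => exists_rotate_omitsThird stepRank_injective (b - a) (c - b) (a - c))
    (fun a b c h h' => ?_) hs
  obtain ⟨hab, hbc⟩ := h.eq_of_rotate h'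
  exact eq_of_sub_eq_sub_of_not_dvd h3 hab hbc

theorem exists_perm_src_eq_tgt [NeZero n] : ∃ σ : Perm (Edge n), ∀ e, (σ e).src = e.tgt := by
  let next (e : Edge n) : Edge n :=
    ⟨(e.1.2.1, e.1.2.2, e.1.2.2 + (e.1.2.1 - e.1.1)), e.2.flip⟩
  have hnext : Injective next := by
    rintro ⟨⟨a, b, c⟩, h⟩ ⟨⟨a', b', c'⟩, h'⟩ heq
    obtain ⟨rfl, rfl, hflip⟩ : b = b' ∧ c = c' ∧ c + (b - a) = c' + (b' - a') := by
      simpa [next] using heq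
    simpa using hflip
  exact ⟨Equiv.ofBijective next (Finite.injective_iff_bijective.1 hnext), fun _ => rfl⟩

/-- A path of the transition graph leads from `v` to `w`. -/
abbrev Reach (v w : Fin n × Fin n) : Prop :=
  ReflTransGen (fun v w => ∃ e : Edge n, e.src = v ∧ e.tgt = w) v w

theorem IsEdge.reach {a b c : Fin n} (h : IsEdge a b c) : Reach (a, b) (b, c) :=
  .single ⟨⟨(a, b, c), h⟩, rfl, rfl⟩

theorem reach_self_self_add [NeZero n] (a : Fin n) {x : Fin n} (hx : 2 * (x : ℕ) < n) :
    Reach (a, a) (a, a + x) :=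
  (isEdge_self_self_add a hx).reach

theorem reach_self_add_one [NeZero n] (hn : 3 ≤ n) (a : Fin n) :
    Reach (a, a) (a + 1, a + 1) := by
  have hone : 2 * ((1 : Fin n) : ℕ) < n := by rw [val_one_eq_one] <;> omega
  have hflip := (isEdge_self_self_add a hone).flip.reach
  rw [sub_self, add_zero] at hflip
  exact (reach_self_self_add a hone).trans hflip

theorem reach_diagonal [NeZero n] (hn : 3 ≤ n) (a : Fin n) : Reach (0, 0) (a, a) := by
  obtain ⟨k, hk⟩ := a
  induction k with
  | zero => exact .refl
  | succ k ih =>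
    have hsucc : (⟨k + 1, hk⟩ : Fin n) = ⟨k, by omega⟩ + 1 := by
      rw [Fin.ext_iff, Fin.val_add_eq_of_add_lt] <;> rw [val_one_eq_one (by omega)]
      exact hk
    rw [hsucc]
    exact (ih _).trans (reach_self_add_one hn _)

theorem reach_src [NeZero n] (hn : 5 ≤ n) (e : Edge n) : Reach (0, 0) e.src := by
  obtain ⟨⟨a, b, c⟩, he⟩ := e
  obtain ⟨x, rfl⟩ : ∃ x, b = a + x := ⟨b - a, by abel⟩
  have hx := he.two_mul_val_sub_le
  rw [add_sub_cancel_left] at hx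
  rcases hx.lt_or_eq with hx | hx
  · exact (reach_diagonal (by omega) a).trans (reach_self_self_add a hx)
  · have hone : 2 * ((1 : Fin n) : ℕ) < n := by rw [val_one_eq_one] <;> omega
    have hstep := reach_self_self_add (a - 1) hone
    have hhalf := (isEdge_add_half (by omega) (a - 1) hx).reach
    rw [sub_add_cancel] at hstep hhalf
    exact ((reach_diagonal (by omega) (a - 1)).trans hstep).trans hhalf

theorem exists_isMcycle_three_of_not_dvd (hn : 5 ≤ n) (h3 : ¬ 3 ∣ n) :
    ∃ a : ZMod ((n + 3 - 1).choose 3) → Fin n, IsMcycle n 3 a := by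
  have : NeZero n := ⟨by omega⟩
  obtain ⟨σ₀, hσ₀⟩ := exists_perm_src_eq_tgt (n := n)
  obtain ⟨e₀, he₀⟩ : ∃ e₀ : Edge n, e₀.src = (0, 0) :=
    ⟨⟨(0, 0, 0 + 0), isEdge_self_self_add 0 (by rw [Fin.val_zero]; omega)⟩, rfl⟩
  obtain ⟨σ, hσ, hcycle⟩ :=
    exists_isCycleOn_of_reflTransGen hσ₀ (e₀ := e₀) fun e => he₀ ▸ reach_src hn e
  have hwindow (e : Edge n) :
      (Multiset.range 3).map (fun j : ℕ => ((σ ^ j) e).1.1) = {e.1.1, e.1.2.1, e.1.2.2} := by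
    have hsecond : (σ e).1.1 = e.1.2.1 := congrArg Prod.fst (hσ e)
    have hthird : (σ (σ e)).1.1 = e.1.2.2 :=
      (congrArg Prod.fst (hσ (σ e))).trans (congrArg Prod.snd (hσ e))
    rw [← hsecond, ← hthird]
    rfl
  exact exists_isMcycle_of_isCycleOn hcycle (letter := fun e => e.1.1) fun s hs => by
    simpa only [hwindow] using existsUnique_edge h3 hs

end Edges

theorem three_mcycle_iff_dvd (n : ℕ) (hn : 4 ≤ n) :
    (∃ a : ZMod ((n + 3 - 1).choose 3) → Fin n, IsMcycle n 3 a) ↔ n ∣ (n + 2).choose 3 := by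
  refine ⟨fun ⟨a, ha⟩ => ha.dvd_choose three_ne_zero, fun hdvd => ?_⟩
  rcases hn.eq_or_lt with rfl | hn
  · exact exists_isMcycle_four_three
  · exact exists_isMcycle_three_of_not_dvd hn
      (not_dvd_of_dvd_choose Nat.prime_three (by omega) hdvd)
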